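/- Let T be a universal continuous first-order theory which has a model companion T', and assume T' is ℵ₀-categorical (any two separable models of T' are isomorphic). Then any existentially closed separable model of T is generic in 𝔖_T, i.e. its isomorphism class is a G_δ dense subset of 𝔖_T. -/

import Mathlib

open scoped Classical

/-! ### A core of continuous first-order logic (countable relational signatures) -/

/-- A countable relational continuous signature: relation symbols indexed by `ℕ`
(with a distinguished metric symbol handled separately in the syntax below),
each with an arity and a prescribed uniform-continuity modulus. -/
structure CSig where
  arity : ℕ → ℕ
  modulus : ℕ → ℝ → ℝ
  modulus_pos : ∀ i ε, 0 < ε → 0 < modulus i ε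

/-- Continuous first-order formulas over `S`, with free variables among `Fin n`.
Connectives: rational constants, pointwise min and max, negation `1 - x`,
truncated plus, truncated minus, `|x - y|`, rescaling by rationals; quantifiers
`inf` and `sup` bind the last variable. -/
inductive CFormula (S : CSig) : ℕ → Type
  | dst : ∀ {n}, Fin n → Fin n → CFormula S n
  | rel : ∀ {n} (i : ℕ), (Fin (S.arity i) → Fin n) → CFormula S n
  | const : ∀ {n}, ℚ → CFormula S n
  | fmin : ∀ {n}, CFormula S n → CFormula S n → CFormula S n
  | fmax : ∀ {n}, CFormula S n → CFormula S n → CFormula S n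
  | neg : ∀ {n}, CFormula S n → CFormula S n
  | addT : ∀ {n}, CFormula S n → CFormula S n → CFormula S n
  | subT : ∀ {n}, CFormula S n → CFormula S n → CFormula S n
  | absd : ∀ {n}, CFormula S n → CFormula S n → CFormula S n
  | scale : ∀ {n}, ℚ → CFormula S n → CFormula S n
  | inf : ∀ {n}, CFormula S (n + 1) → CFormula S n
  | sup : ∀ {n}, CFormula S (n + 1) → CFormula S n

/-- Sentences: formulas with no free variables. -/
abbrev CSentence (S : CSig) := CFormula S 0

/-- Quantifier-free formulas. -/
inductive IsQF {S : CSig} : ∀ {n}, CFormula S n → Prop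
  | dst {n} (a b : Fin n) : IsQF (CFormula.dst a b)
  | rel {n} (i : ℕ) (ts : Fin (S.arity i) → Fin n) : IsQF (CFormula.rel i ts)
  | const {n} (q : ℚ) : IsQF (CFormula.const (n := n) q)
  | fmin {n} {φ ψ : CFormula S n} : IsQF φ → IsQF ψ → IsQF (CFormula.fmin φ ψ)
  | fmax {n} {φ ψ : CFormula S n} : IsQF φ → IsQF ψ → IsQF (CFormula.fmax φ ψ)
  | neg {n} {φ : CFormula S n} : IsQF φ → IsQF (CFormula.neg φ)
  | addT {n} {φ ψ : CFormula S n} : IsQF φ → IsQF ψ → IsQF (CFormula.addT φ ψ)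
  | subT {n} {φ ψ : CFormula S n} : IsQF φ → IsQF ψ → IsQF (CFormula.subT φ ψ)
  | absd {n} {φ ψ : CFormula S n} : IsQF φ → IsQF ψ → IsQF (CFormula.absd φ ψ)
  | scale {n} (q : ℚ) {φ : CFormula S n} : IsQF φ → IsQF (CFormula.scale q φ)

/-- Closure of a class of formulas under (finitely many applications of) `inf`. -/
inductive InfCl {S : CSig} (P : ∀ n, CFormula S n → Prop) : ∀ {n}, CFormula S n → Prop
  | base {n} {φ : CFormula S n} : P n φ → InfCl P φ
  | step {n} {φ : CFormula S (n + 1)} : InfCl P φ → InfCl P (CFormula.inf φ)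

/-- Closure of a class of formulas under (finitely many applications of) `sup`. -/
inductive SupCl {S : CSig} (P : ∀ n, CFormula S n → Prop) : ∀ {n}, CFormula S n → Prop
  | base {n} {φ : CFormula S n} : P n φ → SupCl P φ
  | step {n} {φ : CFormula S (n + 1)} : SupCl P φ → SupCl P (CFormula.sup φ)

/-- The pair (Σₖ, Πₖ) of formula classes: Σ₀ = Π₀ = quantifier-free,
Σ_{k+1} = { inf_x̄ φ : φ ∈ Πₖ }, Π_{k+1} = { sup_x̄ φ : φ ∈ Σₖ }. -/
def SigmaPi (S : CSig) : ℕ → ((∀ n, CFormula S n → Prop) × (∀ n, CFormula S n → Prop))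
  | 0 => (fun _ φ => IsQF φ, fun _ φ => IsQF φ)
  | k + 1 => (fun _ φ => InfCl (SigmaPi S k).2 φ, fun _ φ => SupCl (SigmaPi S k).1 φ)

/-- `φ` is a Σₖ formula. -/
def IsSigmaN (S : CSig) (k : ℕ) {n : ℕ} (φ : CFormula S n) : Prop := (SigmaPi S k).1 n φ

/-- `φ` is a Πₖ formula. -/
def IsPiN (S : CSig) (k : ℕ) {n : ℕ} (φ : CFormula S n) : Prop := (SigmaPi S k).2 n φ

/-- A continuous `L`-structure: a nonempty complete metric space of diameter `≤ 1`
with `[0,1]`-valued interpretations of all predicate symbols, uniformly continuous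
with respect to the prescribed moduli. -/
structure CStructure (S : CSig) where
  Carrier : Type
  metric : MetricSpace Carrier
  nonempty : Nonempty Carrier
  complete : @CompleteSpace Carrier metric.toUniformSpace
  bounded : ∀ x y : Carrier, @dist Carrier metric.toDist x y ≤ 1
  rel : ∀ i, (Fin (S.arity i) → Carrier) → ℝ
  rel_nonneg : ∀ i v, 0 ≤ rel i v
  rel_le_one : ∀ i v, rel i v ≤ 1
  rel_uc : ∀ i (ε : ℝ), 0 < ε → ∀ v w,
    (∀ j, @dist Carrier metric.toDist (v j) (w j) < S.modulus i ε) → |rel i v - rel i w| ≤ ε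

attribute [instance] CStructure.metric CStructure.nonempty CStructure.complete

/-- Clamp a rational constant into `[0,1]`. -/
noncomputable def clampQ (q : ℚ) : ℝ := max 0 (min 1 (q : ℝ))

/-- The value of a formula in a structure under a variable assignment. -/
noncomputable def CStructure.eval {S : CSig} (M : CStructure S) :
    ∀ (n : ℕ), CFormula S n → (Fin n → M.Carrier) → ℝ
  | _, .dst a b, v => dist (v a) (v b)
  | _, .rel i ts, v => M.rel i fun j => v (ts j)
  | _, .const q, _ => clampQ q
  | n, .fmin φ ψ, v => min (M.eval n φ v) (M.eval n ψ v)
  | n, .fmax φ ψ, v => max (M.eval n φ v) (M.eval n ψ v)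
  | n, .neg φ, v => 1 - M.eval n φ v
  | n, .addT φ ψ, v => min 1 (M.eval n φ v + M.eval n ψ v)
  | n, .subT φ ψ, v => max 0 (M.eval n φ v - M.eval n ψ v)
  | n, .absd φ ψ, v => |M.eval n φ v - M.eval n ψ v|
  | n, .scale q φ, v => clampQ q * M.eval n φ v
  | n, .inf φ, v => ⨅ x : M.Carrier, M.eval (n + 1) φ (Fin.snoc v x)
  | n, .sup φ, v => ⨆ x : M.Carrier, M.eval (n + 1) φ (Fin.snoc v x)

/-- The value of a sentence in a structure. -/
noncomputable def CStructure.sval {S : CSig} (M : CStructure S) (φ : CSentence S) : ℝ :=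
  M.eval 0 φ (fun i => i.elim0)

/-- A theory: a set of closed conditions `φ ≤ ε`, coded as pairs `(φ, ε)`. -/
abbrev CTheory (S : CSig) := Set (CSentence S × ℝ)

/-- `M` satisfies the theory `T` (all its closed conditions). -/
def CStructure.SatT {S : CSig} (M : CStructure S) (T : CTheory S) : Prop :=
  ∀ c ∈ T, M.sval c.1 ≤ c.2

/-- The closed condition `φ ≤ ε` follows from `T`. -/
def Entails {S : CSig} (T : CTheory S) (c : CSentence S × ℝ) : Prop :=
  ∀ M : CStructure S, M.SatT T → M.sval c.1 ≤ c.2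

/-- The open condition `φ < ε` follows from `T`. -/
def EntailsOpen {S : CSig} (T : CTheory S) (c : CSentence S × ℝ) : Prop :=
  ∀ M : CStructure S, M.SatT T → M.sval c.1 < c.2

/-- `T` is a theory in the official sense: consistent and closed under entailment. -/
def IsTheory {S : CSig} (T : CTheory S) : Prop :=
  (∃ M : CStructure S, M.SatT T) ∧ ∀ c, Entails T c → c ∈ T

/-- `T` is universal: axiomatizable by closed conditions `sup_x̄ φ(x̄) = 0` with `φ`
quantifier-free (i.e. by conditions `ψ = 0` for Π₁ sentences `ψ`). -/
def IsUniversalTheory {S : CSig} (T : CTheory S) : Prop :=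
  ∃ A : Set (CSentence S), (∀ ψ ∈ A, IsPiN S 1 ψ) ∧
    ∀ M : CStructure S, (M.SatT T ↔ ∀ ψ ∈ A, M.sval ψ = 0)

/-- `T` is inductive: axiomatizable by open conditions `sup_x̄ inf_ȳ φ(x̄,ȳ) < ε` with `φ`
quantifier-free (i.e. by open conditions on Π₂ sentences). -/
def IsInductiveTheory {S : CSig} (T : CTheory S) : Prop :=
  ∃ A : Set (CSentence S × ℝ), (∀ c ∈ A, IsPiN S 2 c.1 ∧ 0 < c.2) ∧
    ∀ M : CStructure S, (M.SatT T ↔ ∀ c ∈ A, M.sval c.1 < c.2)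

/-- An embedding of continuous structures: an isometric map preserving all predicates. -/
structure CEmbedding {S : CSig} (M N : CStructure S) where
  toFun : M.Carrier → N.Carrier
  isometry : ∀ x y, dist (toFun x) (toFun y) = dist x y
  map_rel : ∀ i (v : Fin (S.arity i) → M.Carrier), N.rel i (toFun ∘ v) = M.rel i v

/-- An embedding is elementary if it preserves the values of all formulas. -/
def CEmbedding.Elementary {S : CSig} {M N : CStructure S} (f : CEmbedding M N) : Prop :=
  ∀ (n : ℕ) (φ : CFormula S n) (v : Fin n → M.Carrier),
    N.eval n φ (f.toFun ∘ v) = M.eval n φ v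

/-- `T` is model complete: every embedding between models of `T` is elementary. -/
def IsModelComplete {S : CSig} (T : CTheory S) : Prop :=
  ∀ M N : CStructure S, M.SatT T → N.SatT T → ∀ f : CEmbedding M N, f.Elementary

/-- `M` is an existentially closed model of `T`. -/
def IsEC {S : CSig} (T : CTheory S) (M : CStructure S) : Prop :=
  M.SatT T ∧ ∀ N : CStructure S, N.SatT T → ∀ f : CEmbedding M N,
    ∀ (n : ℕ) (φ : CFormula S (n + 1)), IsQF φ → ∀ b : Fin n → M.Carrier,
      N.eval n (CFormula.inf φ) (f.toFun ∘ b) = M.eval n (CFormula.inf φ) b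

/-- `T'` is the model companion of `T`: the models of `T'` are exactly the
existentially closed models of `T`. -/
def IsModelCompanion {S : CSig} (T T' : CTheory S) : Prop :=
  ∀ M : CStructure S, (M.SatT T' ↔ IsEC T M)

/-- `T'` is ℵ₀-categorical: any two separable models of `T'` are isomorphic. -/
def Aleph0Categorical {S : CSig} (T' : CTheory S) : Prop :=
  ∀ M N : CStructure S, M.SatT T' → N.SatT T' →
    TopologicalSpace.SeparableSpace M.Carrier → TopologicalSpace.SeparableSpace N.Carrier →
    ∃ f : CEmbedding M N, Function.Surjective f.toFun

/-! ### The Polish space `𝔖` of codes of separable structures -/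

/-- A point of `𝔖`: a separable continuous `L`-structure presented on a distinguished
countable dense subset indexed by `ℕ` — i.e. the metric and all predicate values on `ℕ`,
subject to the metric axioms and the uniform-continuity moduli. The actual structure is
the completion; since all predicates and the quantifiers are continuous, all the
first-order data is determined by this code. -/
structure SCode (S : CSig) where
  dd : ℕ → ℕ → ℝ
  R : ∀ i, (Fin (S.arity i) → ℕ) → ℝ
  dd_nonneg : ∀ i j, 0 ≤ dd i j
  dd_le_one : ∀ i j, dd i j ≤ 1
  dd_self : ∀ i, dd i i = 0
  dd_pos : ∀ i j, i ≠ j → 0 < dd i j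
  dd_symm : ∀ i j, dd i j = dd j i
  dd_triangle : ∀ i j k, dd i k ≤ dd i j + dd j k
  R_nonneg : ∀ i v, 0 ≤ R i v
  R_le_one : ∀ i v, R i v ≤ 1
  R_uc : ∀ i (ε : ℝ), 0 < ε → ∀ v w,
    (∀ j, dd (v j) (w j) < S.modulus i ε) → |R i v - R i w| ≤ ε

/-- Value of a formula on a code, under an assignment of variables to points of the
distinguished dense subset; quantifiers range over the dense subset (equivalently,
by uniform continuity, over the completion). -/
noncomputable def SCode.eval {S : CSig} (x : SCode S) :
    ∀ (n : ℕ), CFormula S n → (Fin n → ℕ) → ℝ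
  | _, .dst a b, v => x.dd (v a) (v b)
  | _, .rel i ts, v => x.R i fun j => v (ts j)
  | _, .const q, _ => clampQ q
  | n, .fmin φ ψ, v => min (x.eval n φ v) (x.eval n ψ v)
  | n, .fmax φ ψ, v => max (x.eval n φ v) (x.eval n ψ v)
  | n, .neg φ, v => 1 - x.eval n φ v
  | n, .addT φ ψ, v => min 1 (x.eval n φ v + x.eval n ψ v)
  | n, .subT φ ψ, v => max 0 (x.eval n φ v - x.eval n ψ v)
  | n, .absd φ ψ, v => |x.eval n φ v - x.eval n ψ v|
  | n, .scale q φ, v => clampQ q * x.eval n φ v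
  | n, .inf φ, v => ⨅ k : ℕ, x.eval (n + 1) φ (Fin.snoc v k)
  | n, .sup φ, v => ⨆ k : ℕ, x.eval (n + 1) φ (Fin.snoc v k)

/-- The value of a sentence on a code. -/
noncomputable def SCode.sval {S : CSig} (x : SCode S) (φ : CSentence S) : ℝ :=
  x.eval 0 φ (fun i => i.elim0)

/-- The structure coded by `x` satisfies the theory `T`. -/
def SCode.SatT {S : CSig} (x : SCode S) (T : CTheory S) : Prop :=
  ∀ c ∈ T, x.sval c.1 ≤ c.2

/-- The basic open set `U_{φ(ā),ε} = {x ∈ 𝔖 : φ^x(ā) < ε}`. -/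
def basicSet {S : CSig} (n : ℕ) (φ : CFormula S n) (a : Fin n → ℕ) (ε : ℝ) :
    Set (SCode S) :=
  {x | x.eval n φ a < ε}

/-- The topology on `𝔖` generated by the basic open sets `U_{φ(ā),ε}` for `φ`
quantifier-free, `ā` a tuple from the distinguished dense subset and `ε > 0`. -/
instance SCode.topologicalSpace (S : CSig) : TopologicalSpace (SCode S) :=
  TopologicalSpace.generateFrom
    {U | ∃ (n : ℕ) (φ : CFormula S n) (a : Fin n → ℕ) (ε : ℝ),
      IsQF φ ∧ 0 < ε ∧ U = basicSet n φ a ε}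

/-- `x` codes the structure `M`: the distinguished countable dense subset maps to a dense
sequence in `M` realizing exactly the metric and predicate values recorded in `x`
(i.e. `M` is "the completion" of `x`). For a fixed `M`, `{x ∈ 𝔖 : Codes x M}` is
precisely the isomorphism class of `M` in `𝔖`. -/
def Codes {S : CSig} (x : SCode S) (M : CStructure S) : Prop :=
  ∃ u : ℕ → M.Carrier, DenseRange u ∧ (∀ i j, dist (u i) (u j) = x.dd i j) ∧
    ∀ i (v : Fin (S.arity i) → ℕ), M.rel i (u ∘ v) = x.R i v

open Filter Topology

/-! ### Countability of the set of formulas -/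

/-- A numbering of formulas. -/
noncomputable def fcode {S : CSig} : ∀ {n : ℕ}, CFormula S n → ℕ
  | _, .dst a b => Nat.pair 0 (Nat.pair a b)
  | _, .rel i ts => Nat.pair 1 (Nat.pair i (Encodable.encode ts))
  | _, .const q => Nat.pair 2 (Encodable.encode q)
  | _, .fmin φ ψ => Nat.pair 3 (Nat.pair (fcode φ) (fcode ψ))
  | _, .fmax φ ψ => Nat.pair 4 (Nat.pair (fcode φ) (fcode ψ))
  | _, .neg φ => Nat.pair 5 (fcode φ)
  | _, .addT φ ψ => Nat.pair 6 (Nat.pair (fcode φ) (fcode ψ))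
  | _, .subT φ ψ => Nat.pair 7 (Nat.pair (fcode φ) (fcode ψ))
  | _, .absd φ ψ => Nat.pair 8 (Nat.pair (fcode φ) (fcode ψ))
  | _, .scale q φ => Nat.pair 9 (Nat.pair (Encodable.encode q) (fcode φ))
  | _, .inf φ => Nat.pair 10 (fcode φ)
  | _, .sup φ => Nat.pair 11 (fcode φ)

theorem fcode_inj {S : CSig} {n : ℕ} (φ : CFormula S n) :
    ∀ ψ : CFormula S n, fcode φ = fcode ψ → φ = ψ := by
  induction φ with
  | dst a b => intro ψ h; cases ψ <;> simp_all [fcode, Nat.pair_eq_pair, Fin.ext_iff]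
  | rel i ts =>
    intro ψ h
    cases ψ with
    | rel j us =>
      simp only [fcode, Nat.pair_eq_pair] at h
      obtain ⟨_, rfl, h⟩ := h
      rw [Encodable.encode_injective h]
    | _ => simp [fcode, Nat.pair_eq_pair] at h
  | const q => intro ψ h; cases ψ <;> simp_all [fcode, Nat.pair_eq_pair]
  | fmin φ ψ h1 h2 =>
    intro χ h
    cases χ with
    | fmin a b =>
      simp only [fcode, Nat.pair_eq_pair, true_and] at h
      rw [h1 _ h.1, h2 _ h.2]
    | _ => simp [fcode, Nat.pair_eq_pair] at h
  | fmax φ ψ h1 h2 =>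
    intro χ h
    cases χ with
    | fmax a b =>
      simp only [fcode, Nat.pair_eq_pair, true_and] at h
      rw [h1 _ h.1, h2 _ h.2]
    | _ => simp [fcode, Nat.pair_eq_pair] at h
  | neg φ h1 =>
    intro χ h
    cases χ with
    | neg a =>
      simp only [fcode, Nat.pair_eq_pair, true_and] at h
      rw [h1 _ h]
    | _ => simp [fcode, Nat.pair_eq_pair] at h
  | addT φ ψ h1 h2 =>
    intro χ h
    cases χ with
    | addT a b =>
      simp only [fcode, Nat.pair_eq_pair, true_and] at h
      rw [h1 _ h.1, h2 _ h.2]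
    | _ => simp [fcode, Nat.pair_eq_pair] at h
  | subT φ ψ h1 h2 =>
    intro χ h
    cases χ with
    | subT a b =>
      simp only [fcode, Nat.pair_eq_pair, true_and] at h
      rw [h1 _ h.1, h2 _ h.2]
    | _ => simp [fcode, Nat.pair_eq_pair] at h
  | absd φ ψ h1 h2 =>
    intro χ h
    cases χ with
    | absd a b =>
      simp only [fcode, Nat.pair_eq_pair, true_and] at h
      rw [h1 _ h.1, h2 _ h.2]
    | _ => simp [fcode, Nat.pair_eq_pair] at h
  | scale q φ h1 =>
    intro χ h
    cases χ with
    | scale r a =>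
      simp only [fcode, Nat.pair_eq_pair, true_and] at h
      rw [h1 _ h.2, Encodable.encode_injective h.1]
    | _ => simp [fcode, Nat.pair_eq_pair] at h
  | inf φ h1 =>
    intro χ h
    cases χ with
    | inf a =>
      simp only [fcode, Nat.pair_eq_pair, true_and] at h
      rw [h1 _ h]
    | _ => simp [fcode, Nat.pair_eq_pair] at h
  | sup φ h1 =>
    intro χ h
    cases χ with
    | sup a =>
      simp only [fcode, Nat.pair_eq_pair, true_and] at h
      rw [h1 _ h]
    | _ => simp [fcode, Nat.pair_eq_pair] at h

instance CFormula.instCountable (S : CSig) (n : ℕ) : Countable (CFormula S n) :=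
  Function.Injective.countable (f := fcode) (fun φ ψ h => fcode_inj φ ψ h)

/-! ### Evaluation on raw data -/

/-- Raw data (metric values and predicate values) on a set. -/
abbrev DD (S : CSig) (X : Type) : Type :=
  (X → X → ℝ) × (∀ i, (Fin (S.arity i) → X) → ℝ)

noncomputable def REval {S : CSig} {X : Type} (D : DD S X) :
    ∀ (n : ℕ), CFormula S n → (Fin n → X) → ℝ
  | _, .dst a b, v => D.1 (v a) (v b)
  | _, .rel i ts, v => D.2 i fun j => v (ts j)
  | _, .const q, _ => clampQ q
  | n, .fmin φ ψ, v => min (REval D n φ v) (REval D n ψ v)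
  | n, .fmax φ ψ, v => max (REval D n φ v) (REval D n ψ v)
  | n, .neg φ, v => 1 - REval D n φ v
  | n, .addT φ ψ, v => min 1 (REval D n φ v + REval D n ψ v)
  | n, .subT φ ψ, v => max 0 (REval D n φ v - REval D n ψ v)
  | n, .absd φ ψ, v => |REval D n φ v - REval D n ψ v|
  | n, .scale q φ, v => clampQ q * REval D n φ v
  | n, .inf φ, v => ⨅ x : X, REval D (n + 1) φ (Fin.snoc v x)
  | n, .sup φ, v => ⨆ x : X, REval D (n + 1) φ (Fin.snoc v x)

/-- Raw data of a structure. -/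
def CStructure.data {S : CSig} (M : CStructure S) : DD S M.Carrier :=
  (fun x y => dist x y, M.rel)

/-- Raw data of a code. -/
def SCode.data {S : CSig} (x : SCode S) : DD S ℕ := (x.dd, x.R)

theorem CStructure.eval_eq {S : CSig} (M : CStructure S) {n : ℕ} (φ : CFormula S n) :
    ∀ v, M.eval n φ v = REval M.data n φ v := by
  induction φ with
  | dst a b => intro v; rfl
  | rel i ts => intro v; rfl
  | const q => intro v; rfl
  | _ => intro v; simp only [CStructure.eval, REval, *]

theorem SCode.eval_eq {S : CSig} (M : SCode S) {n : ℕ} (φ : CFormula S n) :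
    ∀ v, M.eval n φ v = REval M.data n φ v := by
  induction φ with
  | dst a b => intro v; rfl
  | rel i ts => intro v; rfl
  | const q => intro v; rfl
  | _ => intro v; simp only [SCode.eval, REval, *]

/-- `u` realizes the data `D` in the data `E`. -/
def Realizes {S : CSig} {X Y : Type} (D : DD S X) (E : DD S Y) (u : X → Y) : Prop :=
  (∀ i j, E.1 (u i) (u j) = D.1 i j) ∧ ∀ i v, E.2 i (u ∘ v) = D.2 i v

theorem qf_map {S : CSig} {X Y : Type} {D : DD S X} {E : DD S Y} {u : X → Y}
    (h : Realizes D E u) {n : ℕ} {φ : CFormula S n} (hφ : IsQF φ) :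
    ∀ v, REval E n φ (u ∘ v) = REval D n φ v := by
  induction hφ with
  | dst a b => intro v; exact h.1 _ _
  | rel i ts => intro v; exact h.2 i (fun j => v (ts j))
  | const q => intro v; rfl
  | _ => intro v; simp only [REval, *]

theorem snoc_comp {X Y : Type} (u : X → Y) {n : ℕ} (v : Fin n → X) (x : X) :
    (Fin.snoc (u ∘ v) (u x) : Fin (n + 1) → Y) = u ∘ (Fin.snoc v x : Fin (n + 1) → X) := by
  funext i
  refine Fin.lastCases ?_ (fun i => ?_) i <;> simp

theorem clampQ_nonneg (q : ℚ) : 0 ≤ clampQ q := le_max_left _ _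
theorem clampQ_le_one (q : ℚ) : clampQ q ≤ 1 := max_le zero_le_one (min_le_left _ _)

/-- Values lie in the unit interval. -/
theorem CStructure.eval_mem {S : CSig} (M : CStructure S) {n : ℕ} (φ : CFormula S n) :
    ∀ v, 0 ≤ M.eval n φ v ∧ M.eval n φ v ≤ 1 := by
  induction φ with
  | dst a b => intro v; exact ⟨dist_nonneg, M.bounded _ _⟩
  | rel i ts => intro v; exact ⟨M.rel_nonneg _ _, M.rel_le_one _ _⟩
  | const q => intro v; exact ⟨clampQ_nonneg q, clampQ_le_one q⟩
  | fmin φ ψ h1 h2 =>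
    intro v; exact ⟨le_min (h1 v).1 (h2 v).1, (min_le_left _ _).trans (h1 v).2⟩
  | fmax φ ψ h1 h2 =>
    intro v; exact ⟨(h1 v).1.trans (le_max_left _ _), max_le (h1 v).2 (h2 v).2⟩
  | neg φ h1 => intro v; have := h1 v; simp only [CStructure.eval]; constructor <;> linarith
  | addT φ ψ h1 h2 =>
    intro v
    exact ⟨le_min zero_le_one (add_nonneg (h1 v).1 (h2 v).1), min_le_left _ _⟩
  | subT φ ψ h1 h2 =>
    intro v
    have a := h1 v
    have b := h2 v
    exact ⟨le_max_left _ _, max_le zero_le_one (by linarith)⟩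
  | absd φ ψ h1 h2 =>
    intro v
    have a := h1 v
    have b := h2 v
    exact ⟨abs_nonneg _, abs_le.2 ⟨by linarith, by linarith⟩⟩
  | scale q φ h1 =>
    intro v
    exact ⟨mul_nonneg (clampQ_nonneg q) (h1 v).1,
      mul_le_one₀ (clampQ_le_one q) (h1 v).1 (h1 v).2⟩
  | inf φ h1 =>
    intro v
    refine ⟨le_ciInf fun x => (h1 _).1, ?_⟩
    obtain ⟨x⟩ := M.nonempty
    exact (ciInf_le ⟨0, by rintro _ ⟨y, rfl⟩; exact (h1 _).1⟩ x).trans (h1 _).2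
  | sup φ h1 =>
    intro v
    refine ⟨?_, ciSup_le fun x => (h1 _).2⟩
    obtain ⟨x⟩ := M.nonempty
    exact (h1 (Fin.snoc v x)).1.trans
      (le_ciSup (f := fun x => M.eval _ φ (Fin.snoc v x))
        ⟨1, by rintro _ ⟨y, rfl⟩; exact (h1 _).2⟩ x)

theorem CStructure.bddBelow {S : CSig} (M : CStructure S) {n : ℕ} (φ : CFormula S n)
    {ι : Type} (f : ι → Fin n → M.Carrier) :
    BddBelow (Set.range fun i => M.eval n φ (f i)) :=
  ⟨0, by rintro _ ⟨y, rfl⟩; exact (M.eval_mem φ _).1⟩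

theorem CStructure.bddAbove {S : CSig} (M : CStructure S) {n : ℕ} (φ : CFormula S n)
    {ι : Type} (f : ι → Fin n → M.Carrier) :
    BddAbove (Set.range fun i => M.eval n φ (f i)) :=
  ⟨1, by rintro _ ⟨y, rfl⟩; exact (M.eval_mem φ _).2⟩

theorem dist_snoc_lt {X : Type} [MetricSpace X] {n : ℕ} {v w : Fin n → X} {δ : ℝ}
    (hδ : 0 < δ) (h : dist v w < δ) (x : X) :
    dist (Fin.snoc v x : Fin (n + 1) → X) (Fin.snoc w x) < δ := by
  rw [dist_pi_lt_iff hδ] at h ⊢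
  intro i
  refine Fin.lastCases ?_ (fun i => ?_) i
  · simpa using hδ
  · simpa using h i

/-- Evaluation is uniformly continuous. -/
theorem CStructure.eval_uc {S : CSig} (M : CStructure S) {n : ℕ} (φ : CFormula S n) :
    UniformContinuous (fun v => M.eval n φ v) := by
  induction φ with
  | dst a b =>
    exact (Pi.uniformContinuous_proj _ a).dist (Pi.uniformContinuous_proj _ b)
  | rel i ts =>
    rw [Metric.uniformContinuous_iff]
    intro ε hε
    refine ⟨S.modulus i (ε / 2), S.modulus_pos _ _ (by linarith), fun v w h => ?_⟩
    rw [dist_pi_lt_iff (S.modulus_pos _ _ (by linarith))] at h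
    have := M.rel_uc i (ε / 2) (by linarith) (fun j => v (ts j)) (fun j => w (ts j))
      (fun j => h _)
    rw [Real.dist_eq]
    simp only [CStructure.eval]
    linarith
  | const q => exact uniformContinuous_const
  | fmin φ ψ h1 h2 =>
    exact lipschitzWith_min.uniformContinuous.comp (h1.prodMk h2)
  | fmax φ ψ h1 h2 =>
    exact lipschitzWith_max.uniformContinuous.comp (h1.prodMk h2)
  | neg φ h1 => exact uniformContinuous_const.sub h1
  | addT φ ψ h1 h2 =>
    exact lipschitzWith_min.uniformContinuous.comp (uniformContinuous_const.prodMk (h1.add h2))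
  | subT φ ψ h1 h2 =>
    exact lipschitzWith_max.uniformContinuous.comp (uniformContinuous_const.prodMk (h1.sub h2))
  | absd φ ψ h1 h2 => exact Real.uniformContinuous_abs.comp (h1.sub h2)
  | scale q φ h1 => exact h1.const_mul' _
  | inf φ h1 =>
    rw [Metric.uniformContinuous_iff] at h1 ⊢
    intro ε hε
    obtain ⟨δ, hδ, h⟩ := h1 (ε / 2) (by linarith)
    refine ⟨δ, hδ, ?_⟩
    have key : ∀ v w, dist v w < δ → M.eval _ (.inf φ) v ≤ M.eval _ (.inf φ) w + ε / 2 := by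
      intro v w hvw
      rw [← sub_le_iff_le_add]
      refine le_ciInf fun x => ?_
      have a : M.eval _ (.inf φ) v ≤ _ := ciInf_le (M.bddBelow φ fun x => Fin.snoc v x) x
      have b := h (dist_snoc_lt hδ hvw x)
      rw [Real.dist_eq, abs_lt] at b
      linarith
    intro v w hvw
    have a := key v w hvw
    have b := key w v (by rwa [dist_comm])
    rw [Real.dist_eq, abs_lt]
    constructor <;> linarith
  | sup φ h1 =>
    rw [Metric.uniformContinuous_iff] at h1 ⊢
    intro ε hε
    obtain ⟨δ, hδ, h⟩ := h1 (ε / 2) (by linarith)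
    refine ⟨δ, hδ, ?_⟩
    have key : ∀ v w, dist v w < δ → M.eval _ (.sup φ) v ≤ M.eval _ (.sup φ) w + ε / 2 := by
      intro v w hvw
      refine ciSup_le fun x => ?_
      have a : _ ≤ M.eval _ (.sup φ) w := le_ciSup (M.bddAbove φ fun x => Fin.snoc w x) x
      have b := h (dist_snoc_lt hδ hvw x)
      rw [Real.dist_eq, abs_lt] at b
      linarith
    intro v w hvw
    have a := key v w hvw
    have b := key w v (by rwa [dist_comm])
    rw [Real.dist_eq, abs_lt]
    constructor <;> linarith

theorem ciInf_dense {Y ι : Type} [TopologicalSpace Y] [Nonempty ι] {u : ι → Y}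
    (hu : DenseRange u) {f : Y → ℝ} (hf : Continuous f) (hb : BddBelow (Set.range f)) :
    ⨅ y, f y = ⨅ i, f (u i) := by
  have : Nonempty Y := ⟨u (Classical.arbitrary ι)⟩
  have hb' : BddBelow (Set.range fun i => f (u i)) := hb.mono (by rintro _ ⟨i, rfl⟩; exact ⟨_, rfl⟩)
  apply le_antisymm
  · exact le_ciInf fun i => ciInf_le hb _
  · refine le_ciInf fun y => ?_
    refine hu.induction_on (p := fun y => (⨅ i, f (u i)) ≤ f y) y
      (isClosed_le continuous_const hf) fun i => ciInf_le hb' i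

theorem ciSup_dense {Y ι : Type} [TopologicalSpace Y] [Nonempty ι] {u : ι → Y}
    (hu : DenseRange u) {f : Y → ℝ} (hf : Continuous f) (hb : BddAbove (Set.range f)) :
    ⨆ y, f y = ⨆ i, f (u i) := by
  have : Nonempty Y := ⟨u (Classical.arbitrary ι)⟩
  have hb' : BddAbove (Set.range fun i => f (u i)) := hb.mono (by rintro _ ⟨i, rfl⟩; exact ⟨_, rfl⟩)
  apply le_antisymm
  · refine ciSup_le fun y => ?_
    refine hu.induction_on (p := fun y => f y ≤ (⨆ i, f (u i))) y
      (isClosed_le hf continuous_const) fun i => le_ciSup hb' i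
  · exact ciSup_le fun i => le_ciSup hb _

theorem continuous_snoc {X : Type} [TopologicalSpace X] {n : ℕ} (v : Fin n → X) :
    Continuous (fun x => (Fin.snoc v x : Fin (n + 1) → X)) := by
  refine continuous_pi fun i => ?_
  refine Fin.lastCases ?_ (fun i => ?_) i
  · simpa using continuous_id'
  · simpa using continuous_const

/-- Evaluation of arbitrary formulas may be computed on a dense subset. -/
theorem dense_eval {S : CSig} {M : CStructure S} {X : Type} [Nonempty X] {D : DD S X}
    {u : X → M.Carrier} (hu : DenseRange u) (h : Realizes D M.data u) {n : ℕ}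
    (φ : CFormula S n) : ∀ v, M.eval n φ (u ∘ v) = REval D n φ v := by
  induction φ with
  | dst a b => intro v; exact h.1 _ _
  | rel i ts => intro v; exact h.2 i (fun j => v (ts j))
  | const q => intro v; rfl
  | inf φ ih =>
    intro v
    simp only [CStructure.eval, REval]
    rw [ciInf_dense (f := fun x => M.eval _ φ (Fin.snoc (u ∘ v) x)) hu
      ((M.eval_uc φ).continuous.comp (continuous_snoc _))
      (M.bddBelow φ fun x => Fin.snoc (u ∘ v) x)]
    simp only [snoc_comp, ih]
  | sup φ ih =>
    intro v
    simp only [CStructure.eval, REval]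
    rw [ciSup_dense (f := fun x => M.eval _ φ (Fin.snoc (u ∘ v) x)) hu
      ((M.eval_uc φ).continuous.comp (continuous_snoc _))
      (M.bddAbove φ fun x => Fin.snoc (u ∘ v) x)]
    simp only [snoc_comp, ih]
  | _ => intro v; simp only [CStructure.eval, REval, *]


/-! ### Completion of pseudo-metric data -/

/-- Data satisfying all the axioms of a code except separation. -/
structure Valid {S : CSig} {X : Type} (D : DD S X) : Prop where
  dd_mem : ∀ i j, 0 ≤ D.1 i j ∧ D.1 i j ≤ 1
  dd_self : ∀ i, D.1 i i = 0
  dd_symm : ∀ i j, D.1 i j = D.1 j i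
  dd_triangle : ∀ i j k, D.1 i k ≤ D.1 i j + D.1 j k
  R_mem : ∀ i v, 0 ≤ D.2 i v ∧ D.2 i v ≤ 1
  R_uc : ∀ i (ε : ℝ), 0 < ε → ∀ v w,
    (∀ j, D.1 (v j) (w j) < S.modulus i ε) → |D.2 i v - D.2 i w| ≤ ε

theorem SCode.valid {S : CSig} (x : SCode S) : Valid x.data :=
  ⟨fun i j => ⟨x.dd_nonneg i j, x.dd_le_one i j⟩, x.dd_self, x.dd_symm, x.dd_triangle,
    fun i v => ⟨x.R_nonneg i v, x.R_le_one i v⟩, x.R_uc⟩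

theorem CStructure.valid {S : CSig} (M : CStructure S) : Valid M.data :=
  ⟨fun i j => ⟨dist_nonneg, M.bounded i j⟩, dist_self, dist_comm, dist_triangle,
    fun i v => ⟨M.rel_nonneg i v, M.rel_le_one i v⟩, M.rel_uc⟩

theorem exists_rel_ext {X Y : Type} [PseudoMetricSpace X] [MetricSpace Y] {u : X → Y}
    (hu : DenseRange u) (hi : Isometry u) {k : ℕ} (m : ℝ → ℝ) (hm : ∀ ε, 0 < ε → 0 < m ε)
    (R : (Fin k → X) → ℝ) (h01 : ∀ v, 0 ≤ R v ∧ R v ≤ 1)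
    (huc : ∀ ε : ℝ, 0 < ε → ∀ v w, (∀ j, dist (v j) (w j) < m ε) → |R v - R w| ≤ ε) :
    ∃ g : (Fin k → Y) → ℝ, (∀ v, g (u ∘ v) = R v) ∧ (∀ v, 0 ≤ g v ∧ g v ≤ 1) ∧
      ∀ ε : ℝ, 0 < ε → ∀ v w, (∀ j, dist (v j) (w j) < m ε) → |g v - g w| ≤ ε := by
  have hd : DenseRange (fun v : Fin k → X => u ∘ v) := DenseRange.piMap (fun _ => hu)
  have hind : IsUniformInducing (fun v : Fin k → X => u ∘ v) := by
    apply Isometry.isUniformInducing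
    refine Isometry.of_dist_eq fun v w => ?_
    refine eq_of_forall_ge_iff fun c => ?_
    by_cases hc : 0 ≤ c
    · simp only [dist_pi_le_iff hc, Function.comp_apply, hi.dist_eq]
    · constructor <;> intro h <;> exact absurd (dist_nonneg.trans h) hc
  have hRc : UniformContinuous R := by
    rw [Metric.uniformContinuous_iff]
    intro ε hε
    refine ⟨m (ε / 2), hm _ (by linarith), fun v w h => ?_⟩
    rw [dist_pi_lt_iff (hm _ (by linarith))] at h
    have := huc (ε / 2) (by linarith) v w h
    rw [Real.dist_eq]
    linarith
  set g := (hind.isDenseInducing hd).extend R with hg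
  have gc : Continuous g := (uniformContinuous_uniformly_extend hind hd hRc).continuous
  have ge : ∀ v, g (u ∘ v) = R v := fun v => uniformly_extend_of_ind hind hd hRc v
  refine ⟨g, ge, fun v => ?_, fun ε hε v w hvw => ?_⟩
  · refine hd.induction_on (p := fun v => 0 ≤ g v ∧ g v ≤ 1) v ?_ ?_
    · exact (isClosed_le continuous_const gc).inter (isClosed_le gc continuous_const)
    · intro a
      rw [ge]
      exact h01 a
  · have hd2 : DenseRange (Prod.map (fun v : Fin k → X => u ∘ v) (fun v : Fin k → X => u ∘ v)) :=
      hd.prodMap hd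
    clear_value g
    let O : Set ((Fin k → Y) × (Fin k → Y)) := {p | ∀ j, dist (p.1 j) (p.2 j) < m ε}
    let C : Set ((Fin k → Y) × (Fin k → Y)) := {p | |g p.1 - g p.2| ≤ ε}
    have hO : IsOpen O := by
      simp only [O, Set.ofPred_forall]
      refine isOpen_iInter_of_finite fun j => ?_
      exact isOpen_lt (by fun_prop) continuous_const
    have hC : IsClosed C := isClosed_le (by fun_prop) continuous_const
    have hmem : (v, w) ∈ O := hvw
    have hsub : O ∩ Set.range
        (Prod.map (fun v : Fin k → X => u ∘ v) (fun v : Fin k → X => u ∘ v)) ⊆ C := by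
      rintro _ ⟨hp, ⟨⟨a, b⟩, rfl⟩⟩
      simp only [O, C, Prod.map_apply, Set.mem_ofPred_eq, Function.comp_apply, hi.dist_eq] at hp ⊢
      rw [ge, ge]
      exact huc ε hε a b hp
    exact closure_minimal hsub hC (Dense.open_subset_closure_inter hd2 hO hmem)

/-- Every pseudo-metric data has a completion. -/
theorem exists_struct {S : CSig} {X : Type} [hX : Nonempty X] {D : DD S X} (h : Valid D) :
    ∃ (N : CStructure S) (u : X → N.Carrier), DenseRange u ∧ Realizes D N.data u := by
  let _ : PseudoMetricSpace X :=
    { dist := D.1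
      dist_self := h.dd_self
      dist_comm := h.dd_symm
      dist_triangle := h.dd_triangle }
  have hdist : ∀ a b : X, dist a b = D.1 a b := fun _ _ => rfl
  let u : X → UniformSpace.Completion X := fun x => (x : UniformSpace.Completion X)
  have hu : DenseRange u := UniformSpace.Completion.denseRange_coe
  have hi : Isometry u := UniformSpace.Completion.coe_isometry
  have hg := fun i => exists_rel_ext hu hi (S.modulus i) (S.modulus_pos i) (D.2 i) (h.R_mem i)
    (h.R_uc i)
  choose g g1 g2 g3 using hg
  have hb : ∀ x y : UniformSpace.Completion X, dist x y ≤ 1 := by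
    intro x y
    refine (hu.prodMap hu).induction_on
      (p := fun p : UniformSpace.Completion X × UniformSpace.Completion X => dist p.1 p.2 ≤ 1)
      (x, y) (isClosed_le (by fun_prop) continuous_const) ?_
    rintro ⟨a, b⟩
    simp only [Prod.map_apply, hi.dist_eq]
    exact (h.dd_mem a b).2
  refine ⟨{ Carrier := UniformSpace.Completion X
            metric := inferInstance
            nonempty := ⟨u hX.some⟩
            complete := inferInstance
            bounded := hb
            rel := g
            rel_nonneg := fun i v => (g2 i v).1
            rel_le_one := fun i v => (g2 i v).2
            rel_uc := g3 }, u, hu, fun i j => hi.dist_eq i j, fun i v => g1 i v⟩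

/-! ### Universal theories on data -/

/-- Data that satisfy a family of sentences. -/
def GoodD {S : CSig} (A : Set (CSentence S)) {X : Type} (D : DD S X) : Prop :=
  Valid D ∧ ∀ ψ ∈ A, REval D 0 ψ (fun i => i.elim0) ≤ 0

/-- `A` is a universal axiomatization of `T`. -/
def UAx {S : CSig} (A : Set (CSentence S)) (T : CTheory S) : Prop :=
  (∀ ψ ∈ A, IsPiN S 1 ψ) ∧ ∀ M : CStructure S, (M.SatT T ↔ ∀ ψ ∈ A, M.sval ψ = 0)

theorem pi1_down {S : CSig} {X : Type} [Nonempty X] {N : CStructure S} {D : DD S X}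
    {u : X → N.Carrier} (hr : Realizes D N.data u) {n : ℕ} {φ : CFormula S n}
    (hφ : SupCl (SigmaPi S 0).1 φ) :
    ∀ v : Fin n → X, N.eval n φ (u ∘ v) ≤ 0 → REval D n φ v ≤ 0 := by
  induction hφ with
  | base h =>
    intro v hv
    rw [← qf_map hr h, ← CStructure.eval_eq]
    exact hv
  | step h ih =>
    intro v hv
    refine ciSup_le fun x => ih _ ?_
    rw [← snoc_comp]
    exact (le_ciSup (N.bddAbove _ fun y => Fin.snoc (u ∘ v) y) (u x)).trans hv

theorem valid_of_realizes {S : CSig} {X Y : Type} {D : DD S X} {E : DD S Y} {u : X → Y}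
    (h : Realizes D E u) (hE : Valid E) : Valid D := by
  obtain ⟨h1, h2⟩ := h
  refine ⟨?_, ?_, ?_, ?_, ?_, ?_⟩
  · intro i j; rw [← h1]; exact hE.dd_mem _ _
  · intro i; rw [← h1]; exact hE.dd_self _
  · intro i j; rw [← h1, ← h1]; exact hE.dd_symm _ _
  · intro i j k; rw [← h1, ← h1, ← h1]; exact hE.dd_triangle _ _ _
  · intro i v; rw [← h2]; exact hE.R_mem _ _
  · intro i ε hε v w hvw
    rw [← h2, ← h2]
    exact hE.R_uc i ε hε _ _ fun j => by simpa only [Function.comp_apply, h1] using hvw j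

theorem good_of_model {S : CSig} {A : Set (CSentence S)} {T : CTheory S} (hA : UAx A T)
    {X : Type} [Nonempty X] {N : CStructure S} (hN : N.SatT T) {D : DD S X}
    {u : X → N.Carrier} (hr : Realizes D N.data u) : GoodD A D := by
  refine ⟨valid_of_realizes hr N.valid, fun ψ hψ => ?_⟩
  refine pi1_down hr (hA.1 ψ hψ) _ ?_
  have := (hA.2 N).1 hN ψ hψ
  rw [← this]
  refine le_of_eq ?_
  unfold CStructure.sval
  congr 1
  funext i
  exact i.elim0

theorem model_of_good {S : CSig} {A : Set (CSentence S)} {T : CTheory S} (hA : UAx A T)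
    {X : Type} [Nonempty X] {N : CStructure S} {D : DD S X} (hD : GoodD A D)
    {u : X → N.Carrier} (hu : DenseRange u) (hr : Realizes D N.data u) : N.SatT T := by
  rw [hA.2 N]
  intro ψ hψ
  refine le_antisymm ?_ (N.eval_mem _ _).1
  refine le_trans (le_of_eq ?_) (hD.2 ψ hψ)
  rw [← dense_eval hu hr]
  unfold CStructure.sval
  congr 1
  funext i
  exact i.elim0

theorem code_sval {S : CSig} {x : SCode S} {N : CStructure S} {u : ℕ → N.Carrier}
    (hu : DenseRange u) (hr : Realizes x.data N.data u) (φ : CSentence S) :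
    x.sval φ = N.sval φ := by
  unfold SCode.sval CStructure.sval
  rw [SCode.eval_eq, ← dense_eval hu hr]
  congr 1
  funext i
  exact i.elim0

theorem code_satT {S : CSig} {x : SCode S} {N : CStructure S} {u : ℕ → N.Carrier}
    (hu : DenseRange u) (hr : Realizes x.data N.data u) (T : CTheory S) :
    x.SatT T ↔ N.SatT T := by
  simp only [SCode.SatT, CStructure.SatT, code_sval hu hr]

theorem code_satT_iff_good {S : CSig} {A : Set (CSentence S)} {T : CTheory S} (hA : UAx A T)
    (x : SCode S) : x.SatT T ↔ GoodD A x.data := by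
  obtain ⟨N, u, hu, hr⟩ := exists_struct x.valid
  rw [code_satT hu hr]
  exact ⟨fun h => good_of_model hA h hr, fun h => model_of_good hA h hu hr⟩

theorem good_of_realizes {S : CSig} {A : Set (CSentence S)} {T : CTheory S} (hA : UAx A T)
    {X Y : Type} [Nonempty X] [Nonempty Y] {D : DD S X} {E : DD S Y} {u : X → Y}
    (h : Realizes D E u) (hE : GoodD A E) : GoodD A D := by
  obtain ⟨N, w, hw, hr⟩ := exists_struct hE.1
  refine good_of_model hA (model_of_good hA hE hw hr) (u := w ∘ u) ⟨fun i j => ?_, fun i v => ?_⟩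
  · rw [← h.1, ← hr.1]; rfl
  · rw [← h.2, ← hr.2]; rfl


/-! ### Topology -/

theorem continuous_qf {S : CSig} {n : ℕ} {φ : CFormula S n} (hφ : IsQF φ) :
    ∀ v : Fin n → ℕ, Continuous (fun D : DD S ℕ => REval D n φ v) := by
  induction hφ with
  | dst a b => intro v; simp only [REval]; fun_prop
  | rel i ts => intro v; simp only [REval]; fun_prop
  | const q => intro v; simp only [REval]; fun_prop
  | fmin _ _ h1 h2 => intro v; exact (h1 v).min (h2 v)
  | fmax _ _ h1 h2 => intro v; exact (h1 v).max (h2 v)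
  | neg _ h1 => intro v; exact continuous_const.sub (h1 v)
  | addT _ _ h1 h2 => intro v; exact continuous_const.min ((h1 v).add (h2 v))
  | subT _ _ h1 h2 => intro v; exact continuous_const.max ((h1 v).sub (h2 v))
  | absd _ _ h1 h2 => intro v; exact ((h1 v).sub (h2 v)).abs
  | scale q _ h1 => intro v; exact continuous_const.mul (h1 v)

theorem pi1_closed {S : CSig} {n : ℕ} {φ : CFormula S n} (hφ : SupCl (SigmaPi S 0).1 φ) :
    ∀ v : Fin n → ℕ, ∃ C : Set (DD S ℕ), IsClosed C ∧
      ∀ D, Valid D → (REval D n φ v ≤ 0 ↔ D ∈ C) := by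
  induction hφ with
  | base h =>
    intro v
    exact ⟨_, isClosed_le (continuous_qf h v) continuous_const, fun D _ => Iff.rfl⟩
  | @step n φ h ih =>
    intro v
    choose C hC hC' using fun k : ℕ => ih (Fin.snoc v k)
    refine ⟨⋂ k, C k, isClosed_iInter hC, fun D hD => ?_⟩
    rw [Set.mem_iInter]
    have hb : BddAbove (Set.range fun k : ℕ => REval D (n + 1) φ (Fin.snoc v k)) := by
      obtain ⟨N, u, hu, hr⟩ := exists_struct hD
      refine ⟨1, ?_⟩
      rintro _ ⟨k, rfl⟩
      dsimp only
      rw [← dense_eval hu hr]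
      exact (N.eval_mem _ _).2
    constructor
    · intro h k
      rw [← hC' k D hD]
      exact (le_ciSup hb k).trans h
    · intro h
      exact ciSup_le fun k => (hC' k D hD).2 (h k)

theorem isClosed_valid (S : CSig) : IsClosed {D : DD S ℕ | Valid D} := by
  have : {D : DD S ℕ | Valid D} =
      {D | (∀ i j, 0 ≤ D.1 i j ∧ D.1 i j ≤ 1)} ∩ {D | ∀ i, D.1 i i = 0} ∩
      {D | ∀ i j, D.1 i j = D.1 j i} ∩ {D | ∀ i j k, D.1 i k ≤ D.1 i j + D.1 j k} ∩
      {D | ∀ i v, 0 ≤ D.2 i v ∧ D.2 i v ≤ 1} ∩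
      {D | ∀ i (ε : ℝ), 0 < ε → ∀ v w,
        (∃ j, S.modulus i ε ≤ D.1 (v j) (w j)) ∨ |D.2 i v - D.2 i w| ≤ ε} := by
    ext D
    constructor
    · intro h
      refine ⟨⟨⟨⟨⟨h.dd_mem, h.dd_self⟩, h.dd_symm⟩, h.dd_triangle⟩, h.R_mem⟩, ?_⟩
      intro i ε hε v w
      by_cases hj : ∃ j, S.modulus i ε ≤ D.1 (v j) (w j)
      · exact Or.inl hj
      · push Not at hj
        exact Or.inr (h.R_uc i ε hε v w hj)
    · rintro ⟨⟨⟨⟨⟨h1, h2⟩, h3⟩, h4⟩, h5⟩, h6⟩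
      refine ⟨h1, h2, h3, h4, h5, fun i ε hε v w hj => ?_⟩
      rcases h6 i ε hε v w with ⟨j, h⟩ | h
      · exact absurd (hj j) (not_lt.2 h)
      · exact h
  rw [this]
  refine ((((IsClosed.inter ?_ ?_).inter ?_).inter ?_).inter ?_).inter ?_
  · simp only [Set.ofPred_forall]
    refine isClosed_iInter fun i => isClosed_iInter fun j => ?_
    rw [Set.ofPred_and]
    exact (isClosed_le (by fun_prop) (by fun_prop)).inter (isClosed_le (by fun_prop) (by fun_prop))
  · simp only [Set.ofPred_forall]
    refine isClosed_iInter fun i => ?_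
    exact isClosed_eq (by fun_prop) (by fun_prop)
  · simp only [Set.ofPred_forall]
    refine isClosed_iInter fun i => isClosed_iInter fun j => ?_
    exact isClosed_eq (by fun_prop) (by fun_prop)
  · simp only [Set.ofPred_forall]
    refine isClosed_iInter fun i => isClosed_iInter fun j => isClosed_iInter fun k => ?_
    exact isClosed_le (by fun_prop) (by fun_prop)
  · simp only [Set.ofPred_forall]
    refine isClosed_iInter fun i => isClosed_iInter fun j => ?_
    rw [Set.ofPred_and]
    exact (isClosed_le (by fun_prop) (by fun_prop)).inter (isClosed_le (by fun_prop) (by fun_prop))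
  · simp only [Set.ofPred_forall]
    refine isClosed_iInter fun i => isClosed_iInter fun ε => isClosed_iInter fun hε =>
      isClosed_iInter fun v => isClosed_iInter fun w => ?_
    rw [Set.ofPred_or, Set.ofPred_exists]
    exact (isClosed_iUnion_of_finite fun j => isClosed_le (by fun_prop) (by fun_prop)).union
      (isClosed_le (by fun_prop) (by fun_prop))

theorem isClosed_good {S : CSig} {A : Set (CSentence S)} (hA : ∀ ψ ∈ A, IsPiN S 1 ψ) :
    IsClosed {D : DD S ℕ | GoodD A D} := by
  choose C hC hC' using fun ψ : A => pi1_closed (hA ψ.1 ψ.2) (fun i => i.elim0)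
  have : {D : DD S ℕ | GoodD A D} = {D | Valid D} ∩ ⋂ ψ : A, C ψ := by
    ext D
    constructor
    · rintro ⟨h1, h2⟩
      exact ⟨h1, Set.mem_iInter.2 fun ψ => (hC' ψ D h1).1 (h2 ψ.1 ψ.2)⟩
    · rintro ⟨h1, h2⟩
      exact ⟨h1, fun ψ hψ => (hC' ⟨ψ, hψ⟩ D h1).2 (Set.mem_iInter.1 h2 ⟨ψ, hψ⟩)⟩
  rw [this]
  exact (isClosed_valid S).inter (isClosed_iInter hC)

theorem isCompact_good {S : CSig} {A : Set (CSentence S)} (hA : ∀ ψ ∈ A, IsPiN S 1 ψ) :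
    IsCompact {D : DD S ℕ | GoodD A D} := by
  have h1 : IsCompact (Set.univ.pi fun _ : ℕ => Set.univ.pi fun _ : ℕ => Set.Icc (0 : ℝ) 1) :=
    isCompact_univ_pi fun _ => isCompact_univ_pi fun _ => isCompact_Icc
  have h2 : IsCompact (Set.univ.pi fun i : ℕ =>
      Set.univ.pi fun _ : Fin (S.arity i) → ℕ => Set.Icc (0 : ℝ) 1) :=
    isCompact_univ_pi fun _ => isCompact_univ_pi fun _ => isCompact_Icc
  refine (h1.prod h2).of_isClosed_subset (isClosed_good hA) ?_
  intro D hD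
  exact ⟨fun i _ j _ => hD.1.dd_mem i j, fun i _ v _ => hD.1.R_mem i v⟩

theorem isOpen_basicSet {S : CSig} {n : ℕ} {φ : CFormula S n} (hφ : IsQF φ) (a : Fin n → ℕ)
    (ε : ℝ) (hε : 0 < ε) : IsOpen (basicSet n φ a ε) :=
  TopologicalSpace.isOpen_generateFrom_of_mem ⟨n, φ, a, ε, hφ, hε, rfl⟩

theorem continuous_code_qf {S : CSig} {n : ℕ} {φ : CFormula S n} (hφ : IsQF φ) (a : Fin n → ℕ)
    (h01 : ∀ x : SCode S, 0 ≤ x.eval n φ a ∧ x.eval n φ a ≤ 1) :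
    Continuous (fun x : SCode S => x.eval n φ a) := by
  rw [OrderTopology.continuous_iff]
  intro c
  constructor
  · by_cases hc : c < 1
    · have := isOpen_basicSet (IsQF.neg hφ) a (1 - c) (by linarith)
      convert this using 1
      ext x
      simp [basicSet, SCode.eval]
    · convert isOpen_empty using 1
      ext x
      simp only [Set.mem_preimage, Set.mem_Ioi, Set.mem_empty_iff_false, iff_false]
      have := h01 x
      linarith
  · by_cases hc : 0 < c
    · exact isOpen_basicSet hφ a c hc
    · convert isOpen_empty using 1
      ext x
      simp only [Set.mem_preimage, Set.mem_Iio, Set.mem_empty_iff_false, iff_false]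
      have := h01 x
      linarith

theorem continuous_data (S : CSig) : Continuous (SCode.data (S := S)) := by
  refine Continuous.prodMk ?_ ?_
  · refine continuous_pi fun i => continuous_pi fun j => ?_
    have := continuous_code_qf (S := S) (IsQF.dst (0 : Fin 2) 1) ![i, j]
      (fun x => ⟨x.dd_nonneg _ _, x.dd_le_one _ _⟩)
    exact this
  · refine continuous_pi fun i => continuous_pi fun v => ?_
    exact continuous_code_qf (S := S) (IsQF.rel i id) v
      (fun x => ⟨x.R_nonneg _ _, x.R_le_one _ _⟩)

theorem isInducing_data (S : CSig) : IsInducing (SCode.data (S := S)) := by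
  refine ⟨le_antisymm (continuous_data S).le_induced ?_⟩
  refine le_generateFrom ?_
  rintro U ⟨n, φ, a, ε, hφ, hε, rfl⟩
  refine ⟨{D | REval D n φ a < ε}, isOpen_lt (continuous_qf hφ a) continuous_const, ?_⟩
  ext x
  simp [basicSet, SCode.eval_eq]

theorem isInducing_dataT {S : CSig} (T : CTheory S) :
    IsInducing (fun y : {x : SCode S // x.SatT T} => y.1.data) :=
  (isInducing_data S).comp IsInducing.subtypeVal

theorem scode_ext {S : CSig} {x y : SCode S} (h : x.data = y.data) : x = y := by
  cases x; cases y
  simp only [SCode.data, Prod.mk.injEq] at h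
  obtain ⟨rfl, rfl⟩ := h
  rfl

/-- Build a code from separated data. -/
def mkCode {S : CSig} (D : DD S ℕ) (h : Valid D) (hs : ∀ i j, i ≠ j → 0 < D.1 i j) : SCode S where
  dd := D.1
  R := D.2
  dd_nonneg := fun i j => (h.dd_mem i j).1
  dd_le_one := fun i j => (h.dd_mem i j).2
  dd_self := h.dd_self
  dd_pos := hs
  dd_symm := h.dd_symm
  dd_triangle := h.dd_triangle
  R_nonneg := fun i v => (h.R_mem i v).1
  R_le_one := fun i v => (h.R_mem i v).2
  R_uc := h.R_uc

theorem baire_codes {S : CSig} {A : Set (CSentence S)} {T : CTheory S} (hA : UAx A T) :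
    BaireSpace {x : SCode S // x.SatT T} := by
  let f : {x : SCode S // x.SatT T} → DD S ℕ × (ℕ → ℕ → ℝ) :=
    fun y => (y.1.data, fun i j => (y.1.dd i j)⁻¹)
  have hcd := (isInducing_dataT T).continuous
  have hdd : ∀ i j, Continuous fun y : {x : SCode S // x.SatT T} => y.1.dd i j := by
    intro i j
    exact (continuous_apply j).comp ((continuous_apply i).comp (continuous_fst.comp hcd))
  have hfc : Continuous f := by
    refine hcd.prodMk (continuous_pi fun i => continuous_pi fun j => ?_)
    by_cases hij : i = j
    · subst hij
      simp only [SCode.dd_self]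
      exact continuous_const
    · exact (hdd i j).inv₀ fun y => (y.1.dd_pos i j hij).ne'
  have hfi : IsInducing f :=
    IsInducing.of_comp hfc continuous_fst (isInducing_dataT T)
  have hfe : IsClosedEmbedding f := by
    refine ⟨⟨hfi, ?_⟩, ?_⟩
    · intro x y hxy
      exact Subtype.ext (scode_ext (congrArg Prod.fst hxy))
    · have : Set.range f = {p | GoodD A p.1} ∩
          ⋂ i, ⋂ j, {p | p.1.1 i j * p.2 i j = if i = j then 0 else 1} ∩
            {p | i = j → p.2 i j = 0} := by
        ext ⟨D, E⟩
        constructor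
        · rintro ⟨y, hy⟩
          obtain ⟨rfl, rfl⟩ := Prod.mk.inj hy
          refine ⟨(code_satT_iff_good hA y.1).1 y.2, ?_⟩
          refine Set.mem_iInter.2 fun i => Set.mem_iInter.2 fun j => ⟨?_, ?_⟩
          · by_cases hij : i = j
            · subst hij
              simp [SCode.data, SCode.dd_self]
            · simp only [Set.mem_ofPred_eq, hij, if_false]
              exact mul_inv_cancel₀ (y.1.dd_pos i j hij).ne'
          · rintro rfl
            simp [SCode.dd_self]
        · rintro ⟨hG, hI⟩
          have hI1 : ∀ i j, D.1 i j * E i j = if i = j then 0 else 1 := fun i j =>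
            (Set.mem_iInter.1 (Set.mem_iInter.1 hI i) j).1
          have hI2 : ∀ i j, i = j → E i j = 0 := fun i j =>
            (Set.mem_iInter.1 (Set.mem_iInter.1 hI i) j).2
          have hG' : GoodD A D := hG
          have hs : ∀ i j, i ≠ j → 0 < D.1 i j := by
            intro i j hij
            refine lt_of_le_of_ne (hG'.1.dd_mem i j).1 fun h0 => ?_
            have := hI1 i j
            rw [← h0, if_neg hij, zero_mul] at this
            exact zero_ne_one this
          refine ⟨⟨mkCode D hG'.1 hs, (code_satT_iff_good hA _).2 hG'⟩, ?_⟩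
          refine Prod.ext rfl ?_
          funext i j
          change (D.1 i j)⁻¹ = E i j
          by_cases hij : i = j
          · rw [hI2 i j hij, hij, hG'.1.dd_self, inv_zero]
          · have := hI1 i j
            rw [if_neg hij] at this
            exact inv_eq_of_mul_eq_one_right this
      rw [this]
      refine ((isClosed_good hA.1).preimage continuous_fst).inter ?_
      refine isClosed_iInter fun i => isClosed_iInter fun j => IsClosed.inter ?_ ?_
      · exact isClosed_eq (by fun_prop) continuous_const
      · by_cases hij : i = j
        · simp only [hij, forall_const]
          exact isClosed_eq (by fun_prop) continuous_const
        · simp only [hij, false_imp_iff]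
          exact isClosed_univ
  have := hfe.polishSpace
  infer_instance


/-! ### Embeddings out of completions -/

theorem CEmbedding.realizes {S : CSig} {M N : CStructure S} (f : CEmbedding M N) :
    Realizes M.data N.data f.toFun := ⟨f.isometry, f.map_rel⟩

theorem CEmbedding.continuous {S : CSig} {M N : CStructure S} (f : CEmbedding M N) :
    Continuous f.toFun := (Isometry.of_dist_eq f.isometry).continuous

theorem CStructure.continuous_rel {S : CSig} (M : CStructure S) (i : ℕ) :
    Continuous (M.rel i) := (M.eval_uc (CFormula.rel i id)).continuous

theorem Realizes.comp {S : CSig} {X Y Z : Type} {D : DD S X} {E : DD S Y} {F : DD S Z}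
    {u : X → Y} {w : Y → Z} (hw : Realizes E F w) (hu : Realizes D E u) :
    Realizes D F (w ∘ u) :=
  ⟨fun i j => (hw.1 _ _).trans (hu.1 _ _), fun i v => (hw.2 i (u ∘ v)).trans (hu.2 i v)⟩

theorem exists_embedding {S : CSig} {X : Type} {D : DD S X} {M N : CStructure S}
    {u : X → M.Carrier} (hu : DenseRange u) (hr : Realizes D M.data u) {g : X → N.Carrier}
    (hg : Realizes D N.data g) : ∃ f : CEmbedding M N, ∀ k, f.toFun (u k) = g k := by
  let _ : PseudoMetricSpace X := PseudoMetricSpace.induced u inferInstance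
  have hui : IsUniformInducing u := ⟨rfl⟩
  have hgi : Isometry g := Isometry.of_dist_eq fun a b => (hg.1 a b).trans (hr.1 a b).symm
  set f := (hui.isDenseInducing hu).extend g with hf
  have fc : Continuous f :=
    (uniformContinuous_uniformly_extend hui hu hgi.uniformContinuous).continuous
  have fe : ∀ v, f (u v) = g v := fun v => uniformly_extend_of_ind hui hu hgi.uniformContinuous v
  clear_value f
  refine ⟨⟨f, ?_, ?_⟩, fe⟩
  · intro x y
    refine (hu.prodMap hu).induction_on
      (p := fun p : M.Carrier × M.Carrier => dist (f p.1) (f p.2) = dist p.1 p.2) (x, y)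
      (isClosed_eq (by fun_prop) (by fun_prop)) ?_
    rintro ⟨a, b⟩
    simp only [Prod.map_apply, fe]
    exact (hg.1 a b).trans (hr.1 a b).symm
  · intro i v
    have hd : DenseRange (fun v : Fin (S.arity i) → X => u ∘ v) := DenseRange.piMap (fun _ => hu)
    refine hd.induction_on
      (p := fun v : Fin (S.arity i) → M.Carrier => N.rel i (f ∘ v) = M.rel i v) v
      (isClosed_eq ((N.continuous_rel i).comp (by fun_prop)) (M.continuous_rel i)) ?_
    intro a
    have : f ∘ (u ∘ a) = g ∘ a := by funext j; exact fe _
    rw [this]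
    exact (hg.2 i a).trans (hr.2 i a).symm

/-! ### The open dense sets -/

/-- Pullback of data. -/
def pullD {S : CSig} {X Y : Type} (E : DD S Y) (u : X → Y) : DD S X :=
  (fun i j => E.1 (u i) (u j), fun i v => E.2 i (u ∘ v))

theorem pullD_realizes {S : CSig} {X Y : Type} (E : DD S Y) (u : X → Y) :
    Realizes (pullD E u) E u := ⟨fun _ _ => rfl, fun _ _ => rfl⟩

theorem pullD_eq {S : CSig} {X Y : Type} {D : DD S X} {E : DD S Y} {u : X → Y}
    (h : Realizes D E u) : pullD E u = D := by
  refine Prod.ext ?_ ?_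
  · funext i j; exact h.1 i j
  · funext i v; exact h.2 i v

/-- Data having a one-point extension to good data with `φ ≤ r` at the new point `0`. -/
def ExtSet {S : CSig} (A : Set (CSentence S)) {n : ℕ} (φ : CFormula S (n + 1)) (a : Fin n → ℕ)
    (r : ℝ) : Set (DD S ℕ) :=
  (fun D => pullD D Nat.succ) ''
    ({D | GoodD A D} ∩ {D | REval D (n + 1) φ (Fin.snoc (Nat.succ ∘ a) 0) ≤ r})

def OSet {S : CSig} (A : Set (CSentence S)) (T : CTheory S) {n : ℕ} (φ : CFormula S (n + 1))
    (a : Fin n → ℕ) (r q : ℝ) : Set {x : SCode S // x.SatT T} :=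
  {y | (∃ k, REval y.1.data (n + 1) φ (Fin.snoc a k) < q) ∨ y.1.data ∉ ExtSet A φ a r}

theorem isOpen_OSet {S : CSig} {A : Set (CSentence S)} {T : CTheory S} (hA : UAx A T) {n : ℕ}
    {φ : CFormula S (n + 1)} (hφ : IsQF φ) (a : Fin n → ℕ) (r q : ℝ) :
    IsOpen (OSet A T φ a r q) := by
  have hc := (isInducing_dataT T).continuous
  have hcomp : IsCompact (ExtSet A φ a r) := by
    refine ((isCompact_good hA.1).inter_right
      (isClosed_le (continuous_qf hφ _) continuous_const)).image ?_
    unfold pullD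
    refine Continuous.prodMk ?_ ?_ <;> fun_prop
  have h1 : IsOpen (⋃ k, {y : {x : SCode S // x.SatT T} |
      REval y.1.data (n + 1) φ (Fin.snoc a k) < q}) :=
    isOpen_iUnion fun k => isOpen_lt ((continuous_qf hφ _).comp hc) continuous_const
  have h2 : IsOpen {y : {x : SCode S // x.SatT T} | y.1.data ∉ ExtSet A φ a r} :=
    hcomp.isClosed.isOpen_compl.preimage hc
  convert h1.union h2 using 1
  ext y
  simp [OSet]

/-- Reordering: insert the new point at position `m`. -/
def sig (m k : ℕ) : ℕ := if k < m then k + 1 else if k = m then 0 else k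

theorem sig_inj (m : ℕ) : Function.Injective (sig m) := by
  intro a b h
  unfold sig at h
  split_ifs at h <;> omega

theorem dense_OSet {S : CSig} {A : Set (CSentence S)} {T : CTheory S} (hA : UAx A T) {n : ℕ}
    {φ : CFormula S (n + 1)} (hφ : IsQF φ) (a : Fin n → ℕ) {r q : ℝ} (hrq : r < q) :
    Dense (OSet A T φ a r q) := by
  intro y
  by_cases hy : y ∈ OSet A T φ a r q
  · exact subset_closure hy
  have hy' := hy
  simp only [OSet, Set.mem_ofPred_eq, not_or, not_not] at hy'
  obtain ⟨hk, D, ⟨hG, hle⟩, hD⟩ := hy'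
  simp only at hD
  change GoodD A D at hG
  change REval D (n + 1) φ (Fin.snoc (Nat.succ ∘ a) 0) ≤ r at hle
  have hrD : Realizes y.1.data D Nat.succ := hD ▸ pullD_realizes D Nat.succ
  -- the new point is really new
  have h0 : ∀ k, 0 < D.1 0 (k + 1) := by
    intro k
    refine lt_of_le_of_ne (hG.1.dd_mem _ _).1 fun h0 => ?_
    obtain ⟨N, w, hw, hr⟩ := exists_struct hG.1
    have hwk : w 0 = w (k + 1) := by
      rw [← dist_eq_zero]
      exact (hr.1 0 (k + 1)).trans h0.symm
    refine hk ⟨k, lt_of_le_of_lt ?_ hrq⟩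
    have e : REval y.1.data (n + 1) φ (Fin.snoc a k) =
        REval D (n + 1) φ (Fin.snoc (Nat.succ ∘ a) 0) := by
      rw [← qf_map hrD hφ, ← qf_map hr hφ, ← qf_map hr hφ, ← snoc_comp, ← snoc_comp, ← snoc_comp,
        hwk]
    exact e.le.trans hle
  have hpos : ∀ i j, i ≠ j → 0 < D.1 i j := by
    intro i j hij
    rcases i with _ | i
    · rcases j with _ | j
      · exact absurd rfl hij
      · exact h0 j
    · rcases j with _ | j
      · rw [hG.1.dd_symm]; exact h0 i
      · have := y.1.dd_pos i j (fun h => hij (by rw [h]))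
        exact (hrD.1 i j).symm ▸ this
  have hGm : ∀ m, GoodD A (pullD D (sig m)) := fun m =>
    good_of_realizes hA (pullD_realizes D (sig m)) hG
  let Y : ℕ → {x : SCode S // x.SatT T} := fun m =>
    ⟨mkCode (pullD D (sig m)) (hGm m).1 (fun i j hij => hpos _ _ fun h => hij (sig_inj m h)),
      (code_satT_iff_good hA _).2 (hGm m)⟩
  have hYd : ∀ m, (Y m).1.data = pullD D (sig m) := fun m => rfl
  have hsig : ∀ k, ∀ᶠ m in atTop, sig m k = k + 1 := by
    intro k
    filter_upwards [eventually_gt_atTop k] with m hm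
    simp [sig, hm]
  have hlim : Tendsto Y atTop (𝓝 y) := by
    rw [(isInducing_dataT T).tendsto_nhds_iff]
    have : ((fun y : {x : SCode S // x.SatT T} => y.1.data) ∘ Y) =
        fun m => pullD D (sig m) := rfl
    rw [this]
    refine Tendsto.prodMk_nhds ?_ ?_
    · refine tendsto_pi_nhds.2 fun i => tendsto_pi_nhds.2 fun j => ?_
      refine tendsto_const_nhds.congr' ?_
      filter_upwards [hsig i, hsig j] with m h1 h2
      simp only [h1, h2]
      exact (hrD.1 i j).symm
    · refine tendsto_pi_nhds.2 fun i => tendsto_pi_nhds.2 fun v => ?_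
      refine tendsto_const_nhds.congr' ?_
      filter_upwards [eventually_all.2 fun j => hsig (v j)] with m h1
      have : sig m ∘ v = Nat.succ ∘ v := funext h1
      rw [this]
      exact (hrD.2 i v).symm
  refine mem_closure_of_tendsto hlim ?_
  filter_upwards [eventually_all.2 fun j => hsig (a j)] with m h1
  refine Or.inl ⟨m, ?_⟩
  rw [hYd, ← qf_map (pullD_realizes D (sig m)) hφ, ← snoc_comp]
  have e1 : sig m ∘ a = Nat.succ ∘ a := funext h1
  have e2 : sig m m = 0 := by simp [sig]
  rw [e1, e2]
  exact hle.trans_lt hrq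

/-! ### Existential closedness -/

theorem ec_mem {S : CSig} {A : Set (CSentence S)} {T : CTheory S} (hA : UAx A T)
    {y : {x : SCode S // x.SatT T}} {M : CStructure S} (hM : IsEC T M) {u : ℕ → M.Carrier}
    (hu : DenseRange u) (hr : Realizes y.1.data M.data u) {n : ℕ}
    {φ : CFormula S (n + 1)} (hφ : IsQF φ) (a : Fin n → ℕ) {r q : ℝ} (hrq : r < q) :
    y ∈ OSet A T φ a r q := by
  by_cases hy : y.1.data ∈ ExtSet A φ a r
  swap
  · exact Or.inr hy
  left
  obtain ⟨D, ⟨hG, hle⟩, hD⟩ := hy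
  simp only at hD
  change GoodD A D at hG
  change REval D (n + 1) φ (Fin.snoc (Nat.succ ∘ a) 0) ≤ r at hle
  have hrD : Realizes y.1.data D Nat.succ := hD ▸ pullD_realizes D Nat.succ
  obtain ⟨N, w, hw, hrw⟩ := exists_struct hG.1
  have hN : N.SatT T := model_of_good hA hG hw hrw
  obtain ⟨f, hf⟩ := exists_embedding hu hr (hrw.comp hrD)
  have h1 := hM.2 N hN f n φ hφ (u ∘ a)
  have h2 : M.eval n (CFormula.inf φ) (u ∘ a) < q := by
    rw [← h1]
    refine lt_of_le_of_lt ?_ (hle.trans_lt hrq)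
    refine (ciInf_le (N.bddBelow φ fun x => Fin.snoc (f.toFun ∘ u ∘ a) x) (w 0)).trans ?_
    have : f.toFun ∘ u ∘ a = w ∘ (Nat.succ ∘ a) := funext fun j => hf _
    rw [this, snoc_comp, N.eval_eq, qf_map hrw hφ]
  rw [dense_eval hu hr] at h2
  exact exists_lt_of_ciInf_lt h2

theorem ec_of_mem {S : CSig} {A : Set (CSentence S)} {T : CTheory S} (hA : UAx A T)
    {y : {x : SCode S // x.SatT T}} {M : CStructure S} {u : ℕ → M.Carrier}
    (hu : DenseRange u) (hr : Realizes y.1.data M.data u)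
    (h : ∀ (n : ℕ) (φ : CFormula S (n + 1)), IsQF φ → ∀ (a : Fin n → ℕ) (r q : ℚ), r < q →
      y ∈ OSet A T φ a r q) : IsEC T M := by
  refine ⟨(code_satT hu hr T).1 y.2, ?_⟩
  intro N hN f n φ hφ b
  have hd : DenseRange (fun v : Fin n → ℕ => u ∘ v) := DenseRange.piMap (fun _ => hu)
  have hfc := f.continuous
  have hcomp : Continuous fun b : Fin n → M.Carrier => f.toFun ∘ b := by fun_prop
  refine hd.induction_on (p := fun b : Fin n → M.Carrier =>
    N.eval n (CFormula.inf φ) (f.toFun ∘ b) = M.eval n (CFormula.inf φ) b) b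
    (isClosed_eq ((N.eval_uc (CFormula.inf φ)).continuous.comp hcomp)
      (M.eval_uc (CFormula.inf φ)).continuous) ?_
  intro a
  refine le_antisymm ?_ ?_
  · refine le_ciInf fun x => ?_
    refine (ciInf_le (N.bddBelow φ fun x => Fin.snoc (f.toFun ∘ u ∘ a) x) (f.toFun x)).trans ?_
    rw [snoc_comp, N.eval_eq, qf_map f.realizes hφ, ← M.eval_eq]
  · by_contra hlt
    rw [not_le] at hlt
    obtain ⟨q, hq1, hq2⟩ := exists_rat_btwn hlt
    obtain ⟨r, hr1, hr2⟩ := exists_rat_btwn hq1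
    obtain ⟨c, hc⟩ := exists_lt_of_ciInf_lt hr1
    let w : ℕ → N.Carrier := fun k => Nat.casesOn k c (fun k => f.toFun (u k))
    have hw := pullD_realizes N.data w
    have hG : GoodD A (pullD N.data w) := good_of_model hA hN hw
    have hE : y.1.data ∈ ExtSet A φ a r := by
      refine ⟨pullD N.data w, ⟨hG, ?_⟩, ?_⟩
      · change REval _ _ _ _ ≤ _
        rw [← qf_map hw hφ, ← snoc_comp, ← N.eval_eq]
        exact hc.le
      · exact pullD_eq (f.realizes.comp hr)
    rcases h n φ hφ a r q (by exact_mod_cast hr2) with ⟨k, hk⟩ | hk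
    · rw [← qf_map hr hφ, ← M.eval_eq, ← snoc_comp] at hk
      have : M.eval n (CFormula.inf φ) (u ∘ a) ≤ _ :=
        ciInf_le (M.bddBelow φ fun x => Fin.snoc (u ∘ a) x) (u k)
      linarith
    · exact hk hE


/-- If a universal theory `T` has an ℵ₀-categorical model companion
`T'`, then any existentially closed separable model `M` of `T` is generic in `𝔖_T`:
its isomorphism class `{y ∈ 𝔖_T : y codes a structure isomorphic to M}` is a `G_δ`
dense subset of `𝔖_T`. -/
theorem ec_model_is_generic (S : CSig) (T T' : CTheory S)
    (hT : IsTheory T) (hT' : IsTheory T') (hU : IsUniversalTheory T)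
    (hmc : IsModelCompanion T T') (hcat : Aleph0Categorical T')
    (M : CStructure S) (hsep : TopologicalSpace.SeparableSpace M.Carrier)
    (hec : IsEC T M) :
    IsGδ {y : {x : SCode S // x.SatT T} | Codes y.1 M} ∧
      Dense {y : {x : SCode S // x.SatT T} | Codes y.1 M} := by
  obtain ⟨A, hA1, hA2⟩ := hU
  have hA : UAx A T := ⟨hA1, hA2⟩
  let I : Type := Σ n : ℕ, {φ : CFormula S (n + 1) // IsQF φ} × (Fin n → ℕ) ×
    {p : ℚ × ℚ // p.1 < p.2}
  let O : I → Set {x : SCode S // x.SatT T} := fun i =>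
    OSet A T i.2.1.1 i.2.2.1 (i.2.2.2.1.1 : ℝ) (i.2.2.2.1.2 : ℝ)
  have hlt : ∀ i : I, ((i.2.2.2.1.1 : ℚ) : ℝ) < ((i.2.2.2.1.2 : ℚ) : ℝ) := fun i =>
    Rat.cast_lt.2 i.2.2.2.2
  have hopen : ∀ i, IsOpen (O i) := fun i => isOpen_OSet hA i.2.1.2 _ _ _
  have hdense : ∀ i, Dense (O i) := fun i => dense_OSet hA i.2.1.2 _ (hlt i)
  have hset : {y : {x : SCode S // x.SatT T} | Codes y.1 M} = ⋂ i, O i := by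
    ext y
    rw [Set.mem_iInter]
    constructor
    · rintro ⟨u, hu, h1, h2⟩ i
      exact ec_mem hA hec hu ⟨h1, h2⟩ i.2.1.2 _ (hlt i)
    · intro h
      obtain ⟨X, u, hu, hr⟩ := exists_struct y.1.valid
      have hX : IsEC T X := ec_of_mem hA hu hr fun n φ hφ a r q hrq =>
        h ⟨n, ⟨φ, hφ⟩, a, ⟨(r, q), hrq⟩⟩
      have hXsep : TopologicalSpace.SeparableSpace X.Carrier :=
        ⟨Set.range u, Set.countable_range u, hu⟩
      obtain ⟨f, hf⟩ := hcat X M ((hmc X).2 hX) ((hmc M).2 hec) hXsep hsep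
      have hc := f.realizes.comp hr
      exact ⟨f.toFun ∘ u, hf.denseRange.comp hu f.continuous, hc.1, hc.2⟩
  rw [hset]
  have := baire_codes hA
  exact ⟨IsGδ.iInter_of_isOpen hopen, dense_iInter_of_isOpen hopen hdense⟩
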